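/- arXiv:1109.6164 — 3 statements merged into one kernel-verified Lean document; each statement's English description precedes it below -/
import Mathlib

section
/- Let K' ⊆ ℝ be a Cantor set (nonempty compact, perfect, totally disconnected) with packing dimension strictly less than 1, and let T ⊆ ℝ have cardinality strictly less than the continuum. Then K' + T = {k + t : k ∈ K', t ∈ T} contains no Lebesgue measurable set of positive measure. -/
open Filter Set MeasureTheory
open scoped Pointwise ENNReal

/-- Minimal number of `ε`-balls needed to cover `s` (as an element of `ℝ≥0∞`,
`⊤` if no finite cover exists). -/
noncomputable def coverN {α : Type*} [PseudoMetricSpace α] (s : Set α) (ε : ℝ) : ℝ≥0∞ :=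
  ⨅ (t : Finset α) (_ : s ⊆ ⋃ x ∈ t, Metric.ball x ε), (t.card : ℝ≥0∞)

open Classical in
/-- Upper box (Minkowski) dimension. -/
noncomputable def ubDim {α : Type*} [PseudoMetricSpace α] (s : Set α) : ℝ≥0∞ :=
  Filter.limsup (fun ε : ℝ =>
      if coverN s ε = ⊤ then ⊤
      else ENNReal.ofReal (Real.log (coverN s ε).toReal / Real.log ε⁻¹))
    (nhdsWithin (0 : ℝ) (Set.Ioi 0))

/-- Packing dimension, defined as modified upper box dimension. -/
noncomputable def packingDim {α : Type*} [PseudoMetricSpace α] (s : Set α) : ℝ≥0∞ :=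
  ⨅ (A : ℕ → Set α) (_ : s ⊆ ⋃ n, A n), ⨆ n, ubDim (A n)

/-- The tuples all of whose entries lie in a common translate of the set `K`. -/
def commonTranslate (n : ℕ) (K : Set ℝ) : Set (Fin n → ℝ) :=
  {x | ∃ t, ∀ i, x i - t ∈ K}

theorem isClosed_commonTranslate {n : ℕ} (hn : n ≠ 0) {K : Set ℝ} (hK : IsCompact K) :
    IsClosed (commonTranslate n K) := by
  have h : commonTranslate n K =
      univ.pi (fun _ : Fin n => K) + {x : Fin n → ℝ | ∀ i j, x i = x j} := by
    ext x
    simp only [commonTranslate, mem_ofPred_eq, Set.mem_add, mem_univ_pi]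
    constructor
    · rintro ⟨t, ht⟩
      exact ⟨fun i => x i - t, ht, fun _ => t, fun _ _ => rfl, by ext i; simp⟩
    · rintro ⟨y, hy, z, hz, rfl⟩
      refine ⟨z ⟨0, Nat.pos_of_ne_zero hn⟩, fun i => ?_⟩
      rw [hz _ i]
      simpa using hy i
  rw [h]
  refine IsClosed.add_left_of_isCompact ?_ (isCompact_univ_pi fun _ => hK)
  simp only [ofPred_forall]
  exact isClosed_iInter fun i => isClosed_iInter fun j =>
    isClosed_eq (continuous_apply i) (continuous_apply j)

/-- A set of upper box dimension less than `d` is covered by at most `M ^ d` balls of radius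
`1 / M`, for all large `M`. -/
theorem eventually_exists_cover_of_ubDim_lt {A : Set ℝ} {d : ℝ}
    (hA : ubDim A < ENNReal.ofReal d) :
    ∀ᶠ M : ℕ in atTop, ∃ c : Finset ℝ, A ⊆ ⋃ x ∈ c, Metric.ball x (1 / (M : ℝ)) ∧
      (c.card : ℝ) ≤ (M : ℝ) ^ d := by
  have hd : 0 < d := ENNReal.ofReal_pos.1 (bot_le.trans_lt hA)
  have hlim : Tendsto (fun M : ℕ => 1 / (M : ℝ)) atTop (nhdsWithin 0 (Ioi 0)) := by
    refine tendsto_nhdsWithin_iff.2 ⟨tendsto_one_div_atTop_nhds_zero_nat, ?_⟩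
    filter_upwards [eventually_gt_atTop 0] with M hM
    have : (0 : ℝ) < M := by exact_mod_cast hM
    exact one_div_pos.2 this
  filter_upwards [hlim.eventually (eventually_lt_of_limsup_lt hA), eventually_gt_atTop 1]
    with M hM hM1
  have hM1' : (1 : ℝ) < M := by exact_mod_cast hM1
  have hlog : 0 < Real.log M := Real.log_pos hM1'
  split_ifs at hM with htop
  · exact absurd hM (by simp)
  rw [ENNReal.ofReal_lt_ofReal_iff hd, one_div, inv_inv, div_lt_iff₀ hlog,
    ← Real.log_rpow (by linarith)] at hM
  have hN : (coverN A (M : ℝ)⁻¹).toReal < (M : ℝ) ^ d := by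
    rcases ENNReal.toReal_nonneg (a := coverN A (M : ℝ)⁻¹).eq_or_lt with h0 | h0
    · rw [← h0]; positivity
    · exact (Real.log_lt_log_iff h0 (by positivity)).1 hM
  rw [one_div] at htop ⊢
  have hN' : coverN A (M : ℝ)⁻¹ < ENNReal.ofReal ((M : ℝ) ^ d) :=
    (ENNReal.lt_ofReal_iff_toReal_lt htop).2 hN
  obtain ⟨c, hc⟩ := iInf_lt_iff.1 hN'
  obtain ⟨hcA, hc⟩ := iInf_lt_iff.1 hc
  refine ⟨c, hcA, ?_⟩
  simpa using ((ENNReal.lt_ofReal_iff_toReal_lt (by simp)).1 hc).le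

theorem volume_common_translate_le {n M : ℕ} (hM : 0 < M) {A : Fin n → Set ℝ}
    {c : Fin n → Finset ℝ} (hc : ∀ i, A i ⊆ ⋃ x ∈ c i, Metric.ball x (1 / (M : ℝ))) (j : ℤ) :
    volume {x : Fin n → ℝ | ∃ t ∈ Ico (j : ℝ) (j + 1), ∀ i, x i - t ∈ A i} ≤
      ENNReal.ofReal (M * (∏ i, ((c i).card : ℝ)) * (4 / M) ^ n) := by
  have hM' : (0 : ℝ) < M := by exact_mod_cast hM
  have hsub : {x : Fin n → ℝ | ∃ t ∈ Ico (j : ℝ) (j + 1), ∀ i, x i - t ∈ A i} ⊆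
      ⋃ q ∈ Finset.range M ×ˢ Fintype.piFinset c,
        Metric.ball (fun i => q.2 i + (j + q.1 / M) : Fin n → ℝ) (2 / M) := by
    rintro x ⟨t, ⟨ht1, ht2⟩, ht⟩
    have : ∀ i, ∃ p ∈ c i, dist (x i - t) p < 1 / M := fun i => by
      simpa using hc i (ht i)
    choose p hp hdist using this
    have hk0 : 0 ≤ M * (t - j) := mul_nonneg hM'.le (by linarith)
    have hk1 : (⌊M * (t - j)⌋₊ : ℝ) ≤ M * (t - j) := Nat.floor_le hk0
    have hk2 : M * (t - j) < ⌊M * (t - j)⌋₊ + 1 := Nat.lt_floor_add_one _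
    have hkM : ⌊M * (t - j)⌋₊ < M := by
      rw [Nat.floor_lt hk0]
      nlinarith
    refine mem_iUnion₂.2 ⟨(⌊M * (t - j)⌋₊, p), by simp [hkM, hp], ?_⟩
    rw [Metric.mem_ball, dist_pi_lt_iff (by positivity)]
    intro i
    have h1 := abs_lt.1 (hdist i)
    set k : ℝ := (⌊M * (t - j)⌋₊ : ℝ)
    have h2 : k / M ≤ t - j := by rw [div_le_iff₀ hM']; linarith
    have h3 : t - j < k / M + 1 / M := by
      rw [← add_div, lt_div_iff₀ hM']; linarith
    have h4 : (2 : ℝ) / M = 1 / M + 1 / M := by ring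
    rw [Real.dist_eq, abs_lt, h4]
    constructor <;> linarith [h1.1, h1.2]
  refine (measure_mono hsub).trans ((measure_biUnion_finset_le _ _).trans ?_)
  have hball : ∀ q : Fin n → ℝ, volume (Metric.ball q (2 / (M : ℝ))) =
      ENNReal.ofReal ((4 / M) ^ n) := fun q => by
    rw [Real.volume_pi_ball _ (by positivity), Fintype.card_fin]
    congr 2
    ring
  simp only [hball, Finset.sum_const, Finset.card_product, Finset.card_range,
    Fintype.card_piFinset, nsmul_eq_mul]
  rw [ENNReal.ofReal_mul (by positivity)]
  refine le_of_eq (congrArg (· * _) ?_)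
  rw [← ENNReal.ofReal_natCast]
  push_cast
  rfl

theorem volume_common_translate_eq_zero {n : ℕ} {d : ℝ} (hd : 1 < n * (1 - d))
    {A : Fin n → Set ℝ} (hA : ∀ i, ubDim (A i) < ENNReal.ofReal d) :
    volume {x : Fin n → ℝ | ∃ t, ∀ i, x i - t ∈ A i} = 0 := by
  have hsub : {x : Fin n → ℝ | ∃ t, ∀ i, x i - t ∈ A i} ⊆
      ⋃ j : ℤ, {x : Fin n → ℝ | ∃ t ∈ Ico (j : ℝ) (j + 1), ∀ i, x i - t ∈ A i} := by
    rintro x ⟨t, ht⟩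
    exact mem_iUnion.2 ⟨⌊t⌋, t, ⟨Int.floor_le t, Int.lt_floor_add_one t⟩, ht⟩
  refine measure_mono_null hsub (measure_iUnion_null fun j => ?_)
  have hlim : Tendsto (fun M : ℕ => ENNReal.ofReal (4 ^ n * (M : ℝ) ^ (-(n * (1 - d) - 1))))
      atTop (nhds 0) := by
    have := ((tendsto_rpow_neg_atTop (sub_pos.2 hd)).comp
      tendsto_natCast_atTop_atTop).const_mul ((4 : ℝ) ^ n)
    simpa using ENNReal.tendsto_ofReal this
  refine le_antisymm (ge_of_tendsto hlim ?_) bot_le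
  filter_upwards [eventually_all.2 fun i => eventually_exists_cover_of_ubDim_lt (hA i),
    eventually_gt_atTop 0] with M hcov hM
  choose c hc hcard using hcov
  have hM' : (0 : ℝ) < M := by exact_mod_cast hM
  refine (volume_common_translate_le hM hc j).trans (ENNReal.ofReal_le_ofReal ?_)
  have hprod : ∏ i, ((c i).card : ℝ) ≤ (M : ℝ) ^ (d * n) := by
    rw [Real.rpow_mul hM'.le, Real.rpow_natCast]
    simpa using Finset.prod_le_prod (s := Finset.univ) (fun i _ => Nat.cast_nonneg (c i).card)
      (fun i _ => hcard i)
  calc (M : ℝ) * (∏ i, ((c i).card : ℝ)) * (4 / M) ^ n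
      ≤ M * (M : ℝ) ^ (d * n) * (4 / M) ^ n := by gcongr
    _ = 4 ^ n * (M : ℝ) ^ (-(n * (1 - d) - 1)) := by
      have : -(n * (1 - d) - 1) = 1 + d * n - n := by ring
      rw [this, Real.rpow_sub hM', Real.rpow_add hM', Real.rpow_one, Real.rpow_natCast, div_pow]
      ring

theorem exists_volume_commonTranslate_eq_zero {K : Set ℝ} (hK : packingDim K < 1) :
    ∃ n : ℕ, n ≠ 0 ∧ volume (commonTranslate n K) = 0 := by
  obtain ⟨A, hA⟩ := iInf_lt_iff.1 hK
  obtain ⟨hKA, hA⟩ := iInf_lt_iff.1 hA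
  obtain ⟨d, hAd, hd1⟩ := ENNReal.lt_iff_exists_nnreal_btwn.1 hA
  have hd1' : (d : ℝ) < 1 := by exact_mod_cast hd1
  obtain ⟨n, hn⟩ := exists_nat_gt (1 / (1 - (d : ℝ)))
  rw [div_lt_iff₀ (by linarith)] at hn
  refine ⟨n, by rintro rfl; norm_num at hn, ?_⟩
  have hsub : commonTranslate n K ⊆
      ⋃ σ : Fin n → ℕ, {x : Fin n → ℝ | ∃ t, ∀ i, x i - t ∈ A (σ i)} := by
    rintro x ⟨t, ht⟩
    choose σ hσ using fun i => mem_iUnion.1 (hKA (ht i))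
    exact mem_iUnion.2 ⟨σ, t, hσ⟩
  refine measure_mono_null hsub (measure_iUnion_null fun σ => ?_)
  refine volume_common_translate_eq_zero hn fun i => ?_
  rw [ENNReal.ofReal_coe_nnreal]
  exact (le_iSup (fun k => ubDim (A k)) (σ i)).trans_lt hAd

/-- A set of positive measure contains a nonempty closed set all of whose nonempty relatively open
subsets have positive measure. -/
theorem exists_isClosed_subset_forall_volume_ball_inter_pos {P : Set ℝ} (hP : MeasurableSet P)
    (hP0 : volume P ≠ 0) :
    ∃ S ⊆ P, IsClosed S ∧ S.Nonempty ∧ ∀ x ∈ S, ∀ r > 0, 0 < volume (Metric.ball x r ∩ S) := by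
  obtain ⟨C, hCP, hC, hC0⟩ := hP.exists_lt_isCompact (pos_iff_ne_zero.2 hP0)
  have hS : (volume.restrict C).support ⊆ C :=
    Measure.support_subset_of_isClosed hC.isClosed (self_mem_ae_restrict hC.measurableSet)
  refine ⟨_, hS.trans hCP, Measure.isClosed_support, Measure.nonempty_support ?_, ?_⟩
  · simpa using hC0.ne'
  · intro x hx r hr
    have h := (Measure.mem_support_iff_forall x).1 hx _ (Metric.ball_mem_nhds x hr)
    rw [← measure_inter_conull (t := (volume.restrict C).support) ?_] at h
    · exact h.trans_le (Measure.restrict_apply_le _ _)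
    · exact Measure.measure_compl_support

theorem exists_refinement {n : ℕ} {E : Set (Fin n → ℝ)} (hE : IsClosed E) (hE0 : volume E = 0)
    {S : Set ℝ} (hS : ∀ x ∈ S, ∀ r > 0, 0 < volume (Metric.ball x r ∩ S))
    {κ : Type*} [Fintype κ] (x : κ → ℝ) (hx : ∀ k, x k ∈ S) {r : ℝ} (hr : 0 < r) :
    ∃ (y : κ → ℝ) (ρ : ℝ), 0 < ρ ∧ (∀ k, y k ∈ S) ∧
      (∀ k, Metric.closedBall (y k) ρ ⊆ Metric.closedBall (x k) r) ∧
      ∀ f : Fin n → κ, Function.Injective f → ∀ z : Fin n → ℝ,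
        (∀ i, z i ∈ Metric.closedBall (y (f i)) ρ) → z ∉ E := by
  have hnull : ∀ f : Fin n → κ, Function.Injective f →
      ∀ᵐ y : κ → ℝ, (fun i => y (f i)) ∉ E := by
    intro f hf
    have hsurj : Function.Surjective (LinearMap.funLeft ℝ ℝ f) :=
      LinearMap.funLeft_surjective_of_injective ℝ ℝ f hf
    exact (ae_comp_linearMap_mem_iff (LinearMap.funLeft ℝ ℝ f) volume volume hsurj
      hE.measurableSet.compl).2 (measure_eq_zero_iff_ae_notMem.1 hE0)
  have hall : ∀ᵐ y : κ → ℝ, ∀ f : Fin n → κ, Function.Injective f → (fun i => y (f i)) ∉ E :=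
    ae_all_iff.2 fun f => ae_all_iff.2 fun hf => hnull f hf
  have hpos : volume (univ.pi fun k => Metric.ball (x k) (r / 2) ∩ S) ≠ 0 := by
    rw [volume_pi, Measure.pi_pi]
    exact Finset.prod_ne_zero_iff.2 fun k _ => (hS _ (hx k) _ (half_pos hr)).ne'
  obtain ⟨y, hy, hyE⟩ : ∃ y ∈ univ.pi fun k => Metric.ball (x k) (r / 2) ∩ S,
      ∀ f : Fin n → κ, Function.Injective f → (fun i => y (f i)) ∉ E := by
    by_contra! hcon
    refine hpos (measure_mono_null (fun y hy => ?_) (ae_iff.1 hall))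
    obtain ⟨f, hf, hyf⟩ := hcon y hy
    exact fun h => h f hf hyf
  have hopen : ∀ᶠ ρ : ℝ in nhdsWithin 0 (Ioi 0), ∀ f : Fin n → κ, Function.Injective f →
      Metric.closedBall (fun i => y (f i)) ρ ⊆ Eᶜ := by
    refine eventually_all.2 fun f => ?_
    by_cases hf : Function.Injective f
    · obtain ⟨ε, hε, hball⟩ := Metric.nhds_basis_closedBall.mem_iff.1
        (hE.isOpen_compl.mem_nhds (hyE f hf))
      filter_upwards [Ioc_mem_nhdsGT hε] with ρ hρ _
      exact (Metric.closedBall_subset_closedBall hρ.2).trans hball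
    · exact Eventually.of_forall fun _ h => absurd h hf
  obtain ⟨ρ, hρE, hρ0, hρr⟩ := (hopen.and (Ioc_mem_nhdsGT (half_pos hr))).exists
  refine ⟨y, ρ, hρ0, fun k => (hy k trivial).2, fun k => ?_, fun f hf z hz => ?_⟩
  · refine Metric.closedBall_subset_closedBall' ?_
    linarith [Metric.mem_ball.1 (hy k trivial).1]
  · refine hρE f hf ?_
    rw [Metric.mem_closedBall, dist_pi_le_iff hρ0.le]
    exact hz

/-- A form of Mycielski's theorem: a closed null set of `n`-tuples can be avoided by the tuples of
distinct members of a family, indexed by the Cantor space, of points of a set of positive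
measure. -/
theorem exists_cantor_family_avoiding {n : ℕ} {E : Set (Fin n → ℝ)} (hE : IsClosed E)
    (hE0 : volume E = 0) {S : Set ℝ} (hSc : IsClosed S) (hSne : S.Nonempty)
    (hS : ∀ x ∈ S, ∀ r > 0, 0 < volume (Metric.ball x r ∩ S)) :
    ∃ φ : (ℕ → Bool) → ℝ, (∀ b, φ b ∈ S) ∧
      ∀ b : Fin n → ℕ → Bool, Function.Injective b → (fun i => φ (b i)) ∉ E := by
  obtain ⟨x₀, hx₀⟩ := hSne
  let Stage (m : ℕ) := {p : ((Fin m → Bool) → ℝ) × ℝ // (∀ s, p.1 s ∈ S) ∧ 0 < p.2}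
  have step : ∀ m (p : Stage m), ∃ q : Stage (m + 1),
      (∀ s : Fin (m + 1) → Bool, Metric.closedBall (q.1.1 s) q.1.2 ⊆
        Metric.closedBall (p.1.1 fun i => s i.castSucc) p.1.2) ∧
      ∀ f : Fin n → Fin (m + 1) → Bool, Function.Injective f → ∀ z : Fin n → ℝ,
        (∀ i, z i ∈ Metric.closedBall (q.1.1 (f i)) q.1.2) → z ∉ E := by
    rintro m ⟨⟨x, r⟩, hx, hr⟩
    obtain ⟨y, ρ, hρ, hyS, hsub, hy⟩ := exists_refinement hE hE0 hS
      (fun s : Fin (m + 1) → Bool => x fun i => s i.castSucc) (fun s => hx _) hr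
    exact ⟨⟨(y, ρ), hyS, hρ⟩, hsub, hy⟩
  choose next hnext havoid using step
  let st : ∀ m, Stage m := fun m =>
    Nat.rec (motive := Stage) ⟨(fun _ => x₀, 1), fun _ => hx₀, one_pos⟩ next m
  have hst : ∀ m, st (m + 1) = next m (st m) := fun m => rfl
  let B (b : ℕ → Bool) (m : ℕ) : Set ℝ :=
    Metric.closedBall ((st m).1.1 fun i => b i) (st m).1.2
  have hB : ∀ b, (⋂ m, B b m ∩ S).Nonempty := by
    intro b
    refine IsCompact.nonempty_iInter_of_sequence_nonempty_isCompact_isClosed _ (fun m => ?_)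
      (fun m => ?_) ((isCompact_closedBall _ _).inter_right hSc)
      (fun m => Metric.isClosed_closedBall.inter hSc)
    · exact inter_subset_inter_left _ (hnext m (st m) fun i => b i)
    · exact ⟨_, Metric.mem_closedBall_self (st m).2.2.le, (st m).2.1 _⟩
  choose φ hφ using hB
  have hφ' : ∀ b m, φ b ∈ B b m ∩ S := fun b => mem_iInter.1 (hφ b)
  refine ⟨φ, fun b => (hφ' b 0).2, fun b hb => ?_⟩
  have hev : ∀ᶠ m : ℕ in atTop, ∀ i j, (∀ k < m, b i k = b j k) → i = j := by
    refine eventually_all.2 fun i => eventually_all.2 fun j => ?_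
    by_cases hij : i = j
    · exact Eventually.of_forall fun _ _ => hij
    · obtain ⟨k, hk⟩ := Function.ne_iff.1 (hb.ne hij)
      filter_upwards [eventually_gt_atTop k] with m hm h
      exact absurd (h k hm) hk
  obtain ⟨m, hm, hm1⟩ := (hev.and (eventually_ge_atTop 1)).exists
  obtain ⟨m, rfl⟩ := Nat.exists_eq_add_of_le' hm1
  refine havoid m (st m) (fun i k => b i k) (fun i j hij => hm i j fun k hk => ?_) _
    fun i => (hφ' (b i) (m + 1)).1
  exact congrFun hij ⟨k, hk⟩

theorem stmt2 (K' : Set ℝ) (hne : K'.Nonempty) (hcomp : IsCompact K') (hperf : Perfect K')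
    (htd : IsTotallyDisconnected K') (hdim : packingDim K' < 1)
    (T : Set ℝ) (hT : Cardinal.mk T < Cardinal.continuum) :
    ∀ P : Set ℝ, P ⊆ K' + T → MeasurableSet P → volume P = 0 := by
  intro P hPT hP
  by_contra hP0
  obtain ⟨n, hn, hnull⟩ := exists_volume_commonTranslate_eq_zero hdim
  obtain ⟨S, hSP, hSc, hSne, hS⟩ := exists_isClosed_subset_forall_volume_ball_inter_pos hP hP0
  obtain ⟨φ, hφS, hφ⟩ :=
    exists_cantor_family_avoiding (isClosed_commonTranslate hn hcomp) hnull hSc hSne hS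
  have hex : ∀ b, ∃ t : T, φ b - t ∈ K' := fun b => by
    obtain ⟨k, hk, t, ht, h⟩ := hPT (hSP (hφS b))
    exact ⟨⟨t, ht⟩, by simpa [← h] using hk⟩
  choose τ hτ using hex
  obtain ⟨t, ht⟩ := Cardinal.exists_infinite_fiber τ (by simpa using hT)
  let e : Fin n ↪ τ ⁻¹' {t} := Fin.valEmbedding.trans (Infinite.natEmbedding _)
  refine hφ (fun i => (e i).1) (fun i j h => e.injective (Subtype.ext h)) ⟨t, fun i => ?_⟩
  have := hτ (e i).1
  rwa [show τ (e i).1 = t from (e i).2] at this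
end

section
/- Let K ⊆ ℝ be a Cantor set with packing dimension strictly less than 1/2. Then there exists a set X ⊆ ℝ which is not Lebesgue null (has positive outer measure) such that for every t ∈ ℝ, the intersection K ∩ (X + t) has at most one element. -/
open Filter Set MeasureTheory
open scoped Pointwise ENNReal

/-- Inside a measurable set of positive measure there is a nonempty closed set all of whose
nonempty relatively open pieces have positive measure. -/
theorem exists_isClosed_subset_forall_ball_pos {B : Set ℝ} (hB : MeasurableSet B)
    (hpos : 0 < volume B) :
    ∃ C ⊆ B, IsClosed C ∧ C.Nonempty ∧
      ∀ x ∈ C, ∀ ε > 0, 0 < volume (C ∩ Metric.ball x ε) := by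
  obtain ⟨C, hCB, hC, hCpos⟩ := hB.exists_lt_isCompact hpos
  have hsub : (volume.restrict C).support ⊆ C :=
    Measure.support_subset_of_isClosed hC.isClosed (ae_restrict_mem hC.measurableSet)
  refine ⟨(volume.restrict C).support, hsub.trans hCB, Measure.isClosed_support,
    Measure.nonempty_support ?_, fun x hx ε hε => ?_⟩
  · rw [Ne, Measure.restrict_eq_zero]
    exact hCpos.ne'
  · have h := (Measure.mem_support_iff_forall x).1 hx _ (Metric.ball_mem_nhds x hε)
    rw [← measure_inter_conull (t := (volume.restrict C).support) Measure.support_mem_ae] at h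
    refine (h.trans_le (Measure.restrict_apply_le C _)).trans_le (measure_mono ?_)
    rw [inter_comm]

/-- Points of `C` can be moved slightly inside `C` so that no tuple of points with distinct
indices lies in a given null set. -/
theorem exists_near_forall_injective_notMem {C : Set ℝ}
    (hC : ∀ x ∈ C, ∀ ε > 0, 0 < volume (C ∩ Metric.ball x ε))
    {n : ℕ} {Z : Set (Fin n → ℝ)} (hZm : MeasurableSet Z) (hZ : volume Z = 0)
    {κ : Type*} [Finite κ] (y : κ → ℝ) (hy : ∀ s, y s ∈ C) {ε : ℝ} (hε : 0 < ε) :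
    ∃ z : κ → ℝ, (∀ s, z s ∈ C ∧ dist (z s) (y s) < ε) ∧
      ∀ σ : Fin n → κ, Function.Injective σ → z ∘ σ ∉ Z := by
  have := Fintype.ofFinite κ
  have hae : ∀ᵐ z : κ → ℝ, ∀ σ : Fin n → κ, Function.Injective σ → z ∘ σ ∉ Z := by
    refine ae_all_iff.2 fun σ => ?_
    by_cases hσ : Function.Injective σ
    · have h := (ae_comp_linearMap_mem_iff (LinearMap.funLeft ℝ ℝ σ)
        (volume : Measure (κ → ℝ)) (volume : Measure (Fin n → ℝ))
        (LinearMap.funLeft_surjective_of_injective ℝ ℝ σ hσ) hZm.compl).2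
        (compl_mem_ae_iff.2 hZ)
      filter_upwards [h] with z hz _ using hz
    · exact Eventually.of_forall fun z h => absurd h hσ
  have hbox : volume (Set.pi univ fun s => C ∩ Metric.ball (y s) ε) ≠ 0 := by
    rw [volume_pi_pi]
    exact Finset.prod_ne_zero_iff.2 fun s _ => (hC _ (hy s) ε hε).ne'
  obtain ⟨z, hz, hz'⟩ := (frequently_ae_mem_iff.2 hbox).and_eventually hae |>.exists
  exact ⟨z, fun s => hz s (mem_univ s), hz'⟩

theorem exists_forall_prefix_eq_dist_lt {α : Type*} [PseudoMetricSpace α] {f : (ℕ → Bool) → α}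
    (hf : Continuous f) {ε : ℝ} (hε : 0 < ε) :
    ∃ m : ℕ, ∀ x y : ℕ → Bool, (∀ i < m, x i = y i) → dist (f x) (f y) < ε := by
  let _ : MetricSpace (ℕ → Bool) := PiNat.metricSpaceOfDiscreteUniformity fun _ => rfl
  obtain ⟨δ, hδ, h⟩ := Metric.uniformContinuous_iff.1
    (CompactSpace.uniformContinuous_of_continuous hf) ε hε
  obtain ⟨m, hm⟩ := exists_pow_lt_of_lt_one hδ (by norm_num : (1 / 2 : ℝ) < 1)
  refine ⟨m, fun x y hxy => h ?_⟩
  exact (PiNat.mem_cylinder_iff_dist_le.1 (PiNat.mem_cylinder_iff.2 hxy)).trans_lt hm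

/-- A measure version of Mycielski's theorem for countably many closed null relations. -/
theorem exists_forall_injective_notMem {C : Set ℝ} (hCc : IsClosed C) (hCne : C.Nonempty)
    (hC : ∀ x ∈ C, ∀ ε > 0, 0 < volume (C ∩ Metric.ball x ε))
    {n : ℕ} {ι : Type*} [Countable ι] {Z : ι → Set (Fin n → ℝ)} (hZc : ∀ i, IsClosed (Z i))
    (hZ : ∀ i, volume (Z i) = 0) :
    ∃ f : (ℕ → Bool) → ℝ, (∀ c, f c ∈ C) ∧
      ∀ i, ∀ σ : Fin n → ℕ → Bool, Function.Injective σ → f ∘ σ ∉ Z i := by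
  have : CompleteSpace C := hCc.completeSpace_coe
  have : Nonempty C(ℕ → Bool, C) := hCne.to_subtype.map (ContinuousMap.const _)
  let T : ℕ → Set (Fin n → ℕ → Bool) := fun k =>
    {σ | Function.Injective fun j (a : Fin k) => σ j a}
  have hT : ∀ k, IsCompact (T k) := fun k => by
    have hc : Continuous fun (σ : Fin n → ℕ → Bool) j (a : Fin k) => σ j a := by fun_prop
    exact ((isClosed_discrete {τ : Fin n → Fin k → Bool | Function.Injective τ}).preimage
      hc).isCompact
  let Φ : C(ℕ → Bool, C) → C(Fin n → ℕ → Bool, Fin n → ℝ) := fun f =>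
    ⟨fun σ j => (f (σ j) : ℝ), by fun_prop⟩
  have hΦ : Continuous Φ := by
    apply ContinuousMap.continuous_of_continuous_uncurry
    simp only [Function.uncurry_def, Φ, ContinuousMap.coe_mk]
    fun_prop
  let O : ι × ℕ → Set C(ℕ → Bool, C) := fun p => {f | MapsTo (Φ f) (T p.2) (Z p.1)ᶜ}
  have hO : ∀ p, IsOpen (O p) := fun p =>
    (ContinuousMap.isOpen_setOfPred_mapsTo (hT p.2) (hZc p.1).isOpen_compl).preimage hΦ
  have hd : ∀ p, Dense (O p) := by
    rintro ⟨i, k⟩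
    refine Metric.dense_iff.2 fun f r hr => ?_
    obtain ⟨m₀, hm₀⟩ := exists_forall_prefix_eq_dist_lt f.continuous (by positivity : 0 < r / 4)
    let m := max m₀ k
    let e : (Fin m → Bool) → ℕ → Bool := fun s a => if h : a < m then s ⟨a, h⟩ else false
    have he : ∀ c : ℕ → Bool, ∀ a < m₀, c a = e (fun b => c b) a := fun c a ha => by
      simp [e, m, ha]
    obtain ⟨z, hz, hz'⟩ := exists_near_forall_injective_notMem hC (hZc i).measurableSet (hZ i)
      (fun s : Fin m → Bool => (f (e s) : ℝ)) (fun s => (f (e s)).2)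
      (by positivity : 0 < r / 4)
    let w : (Fin m → Bool) → C := fun s => ⟨z s, (hz s).1⟩
    let g : C(ℕ → Bool, C) := ⟨fun c => w fun b => c b,
      (continuous_of_discreteTopology (f := w)).comp (by fun_prop)⟩
    refine ⟨g, ?_, fun σ hσ => ?_⟩
    · rw [Metric.mem_ball]
      refine lt_of_le_of_lt ((ContinuousMap.dist_le (by positivity : 0 ≤ r / 2)).2 fun c => ?_)
        (by linarith : r / 2 < r)
      have h1 : dist (g c) (f (e fun b => c b)) < r / 4 := (hz _).2
      have h2 := hm₀ c _ (he c)
      have h3 := dist_triangle_right (g c) (f c) (f (e fun b => c b))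
      linarith
    · refine hz' (fun j b => σ j b) fun j j' h => hσ (funext fun a => ?_)
      exact congrFun h ⟨a, a.2.trans_le (le_max_right _ _)⟩
  obtain ⟨f, hf⟩ := (dense_iInter_of_isOpen hO hd).nonempty
  refine ⟨fun c => f c, fun c => (f c).2, fun i σ hσ => ?_⟩
  have hev : ∀ᶠ k : ℕ in atTop, ∀ j j', (∀ a : Fin k, σ j a = σ j' a) → j = j' := by
    refine eventually_all.2 fun j => eventually_all.2 fun j' => ?_
    by_cases h : σ j = σ j'
    · exact Eventually.of_forall fun _ _ => hσ h
    · obtain ⟨a, ha⟩ := Function.ne_iff.1 h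
      filter_upwards [eventually_gt_atTop a] with k hk hk'
      exact absurd (hk' ⟨a, hk⟩) ha
  obtain ⟨k, hk⟩ := hev.exists
  exact mem_iInter.1 hf (i, k) fun j j' h => hk j j' (congrFun h)

theorem exists_finset_card_lt_of_ubDim_lt {α : Type*} [PseudoMetricSpace α] {A : Set α} {s : ℝ}
    (h : ubDim A < ENNReal.ofReal s) :
    ∀ᶠ ε in nhdsWithin (0 : ℝ) (Ioi 0), ∃ t : Finset α,
      A ⊆ ⋃ x ∈ t, Metric.ball x ε ∧ (t.card : ℝ) < ε ^ (-s) := by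
  have h1 : ∀ᶠ ε in nhdsWithin (0 : ℝ) (Ioi 0), ε < 1 :=
    nhdsWithin_le_nhds (eventually_lt_nhds one_pos)
  filter_upwards [eventually_lt_of_limsup_lt h, self_mem_nhdsWithin, h1] with ε hε hpos hlt
  have hpos' : 0 < ε := hpos
  split_ifs at hε with htop
  · exact absurd hε not_top_lt
  have hL : 0 < Real.log ε⁻¹ := Real.log_pos ((one_lt_inv₀ hpos').2 hlt)
  have hN : (coverN A ε).toReal < ε ^ (-s) := by
    rcases (ENNReal.toReal_nonneg (a := coverN A ε)).eq_or_lt with h0 | h0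
    · rw [← h0]
      positivity
    · rw [ENNReal.ofReal_lt_ofReal_iff'] at hε
      have := (div_lt_iff₀ hL).1 hε.1
      rw [← Real.log_lt_log_iff h0 (by positivity), Real.log_rpow hpos']
      rw [Real.log_inv] at this
      linarith
  rw [← ENNReal.lt_ofReal_iff_toReal_lt htop] at hN
  obtain ⟨t, ht⟩ := iInf_lt_iff.1 hN
  obtain ⟨htA, ht⟩ := iInf_lt_iff.1 ht
  refine ⟨t, htA, ?_⟩
  rw [ENNReal.lt_ofReal_iff_toReal_lt (ENNReal.natCast_ne_top _)] at ht
  simpa using ht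

/-- The set of `n`-tuples lying in a common translate, by `t ∈ [q, q + 1]`, of the difference set. -/
def translateTuples (A A' : Set ℝ) (n : ℕ) (q : ℝ) : Set (Fin n → ℝ) :=
  {x | ∃ t ∈ Icc q (q + 1), ∀ j, x j - t ∈ A - A'}

theorem volume_closure_translateTuples_le {A A' : Set ℝ} (n : ℕ) (q : ℝ) {ε : ℝ} (hε : 0 < ε)
    {T T' : Finset ℝ} (hT : A ⊆ ⋃ x ∈ T, Metric.ball x ε)
    (hT' : A' ⊆ ⋃ x ∈ T', Metric.ball x ε) :
    volume (closure (translateTuples A A' n q)) ≤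
      ENNReal.ofReal ((1 / ε + 1) * (T.card * T'.card) ^ n * (6 * ε) ^ n) := by
  let F : Finset (ℕ × (Fin n → ℝ × ℝ)) :=
    Finset.range (⌊1 / ε⌋₊ + 1) ×ˢ Fintype.piFinset fun _ => T ×ˢ T'
  let center : ℕ × (Fin n → ℝ × ℝ) → Fin n → ℝ := fun p j =>
    q + p.1 * ε + ((p.2 j).1 - (p.2 j).2)
  have hsub : closure (translateTuples A A' n q) ⊆
      ⋃ p ∈ F, Metric.closedBall (center p) (3 * ε) := by
    refine closure_minimal ?_
      (F.finite_toSet.isClosed_biUnion fun p _ => Metric.isClosed_closedBall)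
    rintro x ⟨t, ht, hx⟩
    have hx' : ∀ j, ∃ d ∈ T ×ˢ T', |x j - t - (d.1 - d.2)| ≤ 2 * ε := fun j => by
      obtain ⟨a, ha, b, hb, hab⟩ := hx j
      obtain ⟨c, hc, hac⟩ := mem_iUnion₂.1 (hT ha)
      obtain ⟨c', hc', hbc⟩ := mem_iUnion₂.1 (hT' hb)
      refine ⟨(c, c'), Finset.mem_product.2 ⟨hc, hc'⟩, ?_⟩
      rw [Metric.mem_ball, Real.dist_eq, abs_lt] at hac hbc
      rw [← hab, abs_le]
      constructor <;> linarith
    choose d hd hxd using hx'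
    have hk0 : 0 ≤ (t - q) / ε := div_nonneg (by linarith [ht.1]) hε.le
    have hk1 := (le_div_iff₀ hε).1 (Nat.floor_le hk0)
    have hk2 := (div_lt_iff₀ hε).1 (Nat.lt_floor_add_one ((t - q) / ε))
    refine mem_iUnion₂.2 ⟨(⌊(t - q) / ε⌋₊, d), Finset.mem_product.2 ⟨?_, ?_⟩, ?_⟩
    · rw [Finset.mem_range, Nat.lt_succ_iff]
      refine Nat.floor_le_floor ?_
      gcongr
      linarith [ht.2]
    · exact Fintype.mem_piFinset.2 hd
    · rw [Metric.mem_closedBall, dist_pi_le_iff (by positivity)]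
      intro j
      have := abs_le.1 (hxd j)
      rw [Real.dist_eq, abs_le]
      constructor <;> simp only [center] <;> linarith
  have hvol : ∀ p, volume (Metric.closedBall (center p) (3 * ε)) =
      ENNReal.ofReal ((6 * ε) ^ n) := fun p => by
    rw [Real.volume_pi_closedBall _ (by positivity), Fintype.card_fin]
    ring_nf
  calc volume (closure (translateTuples A A' n q))
      ≤ ∑ p ∈ F, volume (Metric.closedBall (center p) (3 * ε)) :=
        (measure_mono hsub).trans (measure_biUnion_finset_le _ _)
    _ = ENNReal.ofReal (F.card * (6 * ε) ^ n) := by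
        rw [Finset.sum_congr rfl fun p _ => hvol p, Finset.sum_const, nsmul_eq_mul,
          ENNReal.ofReal_mul (by positivity), ENNReal.ofReal_natCast]
    _ ≤ _ := by
        have hF : (F.card : ℝ) = (⌊1 / ε⌋₊ + 1) * (T.card * T'.card) ^ n := by
          simp [F, Finset.card_product]
        rw [hF]
        gcongr
        exact Nat.floor_le (by positivity)

theorem volume_closure_translateTuples_eq_zero {A A' : Set ℝ} {s : ℝ}
    (hA : ubDim A < ENNReal.ofReal s) (hA' : ubDim A' < ENNReal.ofReal s) {n : ℕ}
    (hn : 1 < n * (1 - 2 * s)) (q : ℝ) :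
    volume (closure (translateTuples A A' n q)) = 0 := by
  have h1 : ∀ᶠ ε in nhdsWithin (0 : ℝ) (Ioi 0), ε < 1 :=
    nhdsWithin_le_nhds (eventually_lt_nhds one_pos)
  have hbound : ∀ᶠ ε in nhdsWithin (0 : ℝ) (Ioi 0),
      volume (closure (translateTuples A A' n q)) ≤
        ENNReal.ofReal (2 * 6 ^ n * ε ^ (n * (1 - 2 * s) - 1)) := by
    filter_upwards [exists_finset_card_lt_of_ubDim_lt hA, exists_finset_card_lt_of_ubDim_lt hA',
      self_mem_nhdsWithin, h1] with ε ⟨T, hT, hTc⟩ ⟨T', hT', hTc'⟩ hpos hlt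
    have hε : 0 < ε := hpos
    refine (volume_closure_translateTuples_le n q hε hT hT').trans (ENNReal.ofReal_le_ofReal ?_)
    have hinv : 1 / ε + 1 ≤ 2 * ε ^ (-1 : ℝ) := by
      rw [Real.rpow_neg_one, one_div]
      linarith [(one_lt_inv₀ hε).2 hlt]
    calc (1 / ε + 1) * (T.card * T'.card) ^ n * (6 * ε) ^ n
        ≤ (2 * ε ^ (-1 : ℝ)) * (ε ^ (-s) * ε ^ (-s)) ^ n * (6 * ε) ^ n := by gcongr
      _ = 2 * 6 ^ n * (ε ^ (-1 : ℝ) * (ε ^ (-s) * ε ^ (-s) * ε ^ (1 : ℝ)) ^ n) := by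
          rw [Real.rpow_one]
          ring
      _ = 2 * 6 ^ n * ε ^ (n * (1 - 2 * s) - 1) := by
          rw [← Real.rpow_add hε, ← Real.rpow_add hε, ← Real.rpow_mul_natCast hε.le,
            ← Real.rpow_add hε]
          ring_nf
  have htend : Tendsto (fun ε : ℝ => ENNReal.ofReal (2 * 6 ^ n * ε ^ (n * (1 - 2 * s) - 1)))
      (nhdsWithin 0 (Ioi 0)) (nhds 0) := by
    have hp : 0 < n * (1 - 2 * s) - 1 := by linarith
    have hc : Continuous fun ε : ℝ =>
        ENNReal.ofReal (2 * 6 ^ n * ε ^ (n * (1 - 2 * s) - 1)) :=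
      ENNReal.continuous_ofReal.comp
        (continuous_const.mul (Real.continuous_rpow_const hp.le))
    have := hc.tendsto 0
    simp only [Real.zero_rpow hp.ne', mul_zero, ENNReal.ofReal_zero] at this
    exact this.mono_left nhdsWithin_le_nhds
  exact le_antisymm (ge_of_tendsto htend hbound) zero_le

theorem exists_forall_countable_sub_mem {K : Set ℝ} (hdim : packingDim K < 1 / 2) {B : Set ℝ}
    (hB : MeasurableSet B) (hpos : 0 < volume B) :
    ∃ f : (ℕ → Bool) → ℝ, (∀ c, f c ∈ B) ∧ ∀ t, {c | f c - t ∈ K - K}.Countable := by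
  obtain ⟨A, hA⟩ := iInf_lt_iff.1 hdim
  obtain ⟨hKA, hA⟩ := iInf_lt_iff.1 hA
  obtain ⟨s, -, hAs, hs⟩ := ENNReal.lt_iff_exists_real_btwn.1 hA
  have hs : s < 1 / 2 := by
    have h2 : (1 / 2 : ℝ≥0∞) = ENNReal.ofReal (1 / 2) := by
      rw [ENNReal.ofReal_div_of_pos two_pos]
      simp
    rw [h2, ENNReal.ofReal_lt_ofReal_iff'] at hs
    exact hs.1
  have hAs : ∀ i, ubDim (A i) < ENNReal.ofReal s := fun i =>
    (le_iSup (fun i => ubDim (A i)) i).trans_lt hAs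
  obtain ⟨n, hn⟩ := exists_nat_gt (1 / (1 - 2 * s))
  have hn : 1 < n * (1 - 2 * s) := (div_lt_iff₀ (by linarith)).1 hn
  obtain ⟨C, hCB, hCc, hCne, hC⟩ := exists_isClosed_subset_forall_ball_pos hB hpos
  obtain ⟨f, hfC, hf⟩ := exists_forall_injective_notMem hCc hCne hC
    (Z := fun i : ℕ × ℕ × ℤ => closure (translateTuples (A i.1) (A i.2.1) n i.2.2))
    (fun _ => isClosed_closure)
    (fun i => volume_closure_translateTuples_eq_zero (hAs _) (hAs _) hn _)
  refine ⟨f, fun c => hCB (hfC c), fun t => ?_⟩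
  have hfin : ∀ a b, {c | f c - t ∈ A a - A b}.Finite := fun a b => by
    by_contra hinf
    let e := Set.Infinite.natEmbedding _ hinf
    refine hf (a, b, ⌊t⌋) (fun j => e j) ?_ (subset_closure ?_)
    · exact Subtype.val_injective.comp (e.injective.comp Fin.val_injective)
    · exact ⟨t, ⟨Int.floor_le t, (Int.lt_floor_add_one t).le⟩, fun j => (e j).2⟩
  refine (countable_iUnion fun a => countable_iUnion fun b => (hfin a b).countable).mono ?_
  rintro c ⟨x, hx, y, hy, hxy⟩
  obtain ⟨a, ha⟩ := mem_iUnion.1 (hKA hx)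
  obtain ⟨b, hb⟩ := mem_iUnion.1 (hKA hy)
  exact mem_iUnion₂.2 ⟨a, b, x, ha, y, hb, hxy⟩

open Cardinal in
theorem exists_mem_forall_sub_notMem {K : Set ℝ} (hdim : packingDim K < 1 / 2) {B : Set ℝ}
    (hB : MeasurableSet B) (hpos : 0 < volume B) {S : Set ℝ} (hS : #S < 𝔠) :
    ∃ x ∈ B, ∀ t ∈ S, x - t ∉ K - K := by
  obtain ⟨f, hfB, hf⟩ := exists_forall_countable_sub_mem hdim hB hpos
  have hlt : #(⋃ t ∈ S, {c | f c - t ∈ K - K}) < #(ℕ → Bool) := by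
    have hle : #(⋃ t ∈ S, {c | f c - t ∈ K - K}) ≤ #S * ℵ₀ :=
      (mk_biUnion_le _ _).trans (mul_le_mul_right (ciSup_le' fun t : S => (hf t).le_aleph0) _)
    refine hle.trans_lt ?_
    have hc : #(ℕ → Bool) = 𝔠 := by simp
    rw [hc]
    exact mul_lt_of_lt aleph0_le_continuum hS aleph0_lt_continuum
  obtain ⟨c, hc⟩ : ∃ c, c ∉ ⋃ t ∈ S, {c | f c - t ∈ K - K} := by
    by_contra! h
    rw [eq_univ_of_forall h, mk_univ] at hlt
    exact hlt.false
  exact ⟨f c, hfB c, fun t ht h => hc (mem_iUnion₂.2 ⟨t, ht, h⟩)⟩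

open Cardinal in
theorem mk_measurableSet_real_le_continuum : #{B : Set ℝ | MeasurableSet B} ≤ 𝔠 := by
  have h := MeasurableSpace.cardinal_measurableSet_le_continuum
    (s := TopologicalSpace.countableBasis ℝ)
    ((TopologicalSpace.countable_countableBasis ℝ).le_aleph0.trans aleph0_le_continuum)
  rwa [← (TopologicalSpace.isBasis_countableBasis ℝ).borel_eq_generateFrom,
    ← BorelSpace.measurable_eq (α := ℝ)] at h

open Cardinal in
/-- If every measurable set of positive measure contains a point avoiding fewer than continuum
many translates of `D`, then there is a non-null set whose nonzero differences avoid `D`. -/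
theorem exists_pos_volume_forall_sub_notMem {D : Set ℝ} (hneg : ∀ d ∈ D, -d ∈ D)
    (h : ∀ B : Set ℝ, MeasurableSet B → 0 < volume B → ∀ S : Set ℝ, #S < 𝔠 →
      ∃ x ∈ B, ∀ t ∈ S, x - t ∉ D) :
    ∃ X : Set ℝ, 0 < volume X ∧ ∀ x ∈ X, ∀ y ∈ X, x ≠ y → x - y ∉ D := by
  let P := {B : Set ℝ // MeasurableSet B ∧ 0 < volume B}
  have hP : #P ≤ #(continuum.ord.ToType) := by
    rw [mk_ord_toType]
    exact (mk_subtype_mono fun B hB => hB.1).trans mk_measurableSet_real_le_continuum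
  obtain ⟨e⟩ := Cardinal.le_def _ _ |>.1 hP
  have : Nonempty P := ⟨univ, MeasurableSet.univ, by simp⟩
  let g := Function.invFun e
  have hg : Function.Surjective g := Function.invFun_surjective e.injective
  have key : ∀ (i : continuum.ord.ToType) (x : Iio i → ℝ), ∃ y ∈ (g i).1, ∀ j, y - x j ∉ D := by
    intro i x
    obtain ⟨y, hy, hyx⟩ := h _ (g i).2.1 (g i).2.2 (range x)
      (mk_range_le.trans_lt ((mk_Iio_lt i (by simp)).trans_eq (mk_ord_toType _)))
    exact ⟨y, hy, fun j => hyx _ (mem_range_self j)⟩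
  choose F hFmem hF using key
  let x : continuum.ord.ToType → ℝ := WellFoundedLT.fix fun i ih => F i fun j => ih j j.2
  have hx : ∀ i, x i = F i fun j => x j := fun i => WellFoundedLT.fix_eq _ i
  have hlt : ∀ i j, j < i → x i - x j ∉ D := fun i j hji => by
    rw [hx i]
    exact hF i (fun j => x j) ⟨j, hji⟩
  refine ⟨range x, pos_iff_ne_zero.2 fun h0 => ?_, ?_⟩
  · have hB : 0 < volume (toMeasurable volume (range x))ᶜ := by
      rw [measure_compl (measurableSet_toMeasurable _ _) (by simp [h0])]
      simp [h0]
    obtain ⟨i, hi⟩ := hg ⟨_, (measurableSet_toMeasurable _ _).compl, hB⟩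
    have := hFmem i fun j => x j
    rw [← hx, hi] at this
    exact this (subset_toMeasurable _ _ (mem_range_self i))
  · rintro _ ⟨i, rfl⟩ _ ⟨j, rfl⟩ hne
    rcases lt_trichotomy i j with hij | rfl | hij
    · intro hd
      refine hlt j i hij ?_
      simpa using hneg _ hd
    · exact absurd rfl hne
    · exact hlt i j hij

theorem stmt4 (K : Set ℝ) (hne : K.Nonempty) (hcomp : IsCompact K) (hperf : Perfect K)
    (htd : IsTotallyDisconnected K) (hdim : packingDim K < 1 / 2) :
    ∃ X : Set ℝ, 0 < volume X ∧
      ∀ t : ℝ, (K ∩ (fun x => x + t) '' X).Subsingleton := by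
  obtain ⟨X, hX, hXK⟩ := exists_pos_volume_forall_sub_notMem (D := K - K)
    (by rintro _ ⟨a, ha, b, hb, rfl⟩; exact ⟨b, hb, a, ha, by simp⟩)
    fun B hB hpos S hS => exists_mem_forall_sub_notMem hdim hB hpos hS
  refine ⟨X, hX, ?_⟩
  rintro t _ ⟨hxK, x, hx, rfl⟩ _ ⟨hyK, y, hy, rfl⟩
  by_contra hxy
  exact hXK x hx y hy (fun h => hxy (by rw [h])) ⟨x + t, hxK, y + t, hyK, by simp⟩
end

section
/- There exist a set X ⊆ ℝ with positive Lebesgue outer measure and a Borel probability measure μ on ℝ such that μ(X + t) = 0 for every t ∈ ℝ (where μ is extended to arbitrary sets as an outer measure). -/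
open MeasureTheory

open Set Topology

open scoped ENNReal

theorem continuous_cantorFunction {c : ℝ} (h₀ : 0 ≤ c) (h₁ : c < 1) :
    Continuous (Cardinal.cantorFunction c) := by
  unfold Cardinal.cantorFunction
  refine continuous_tsum (u := fun n => c ^ n) (fun n => ?_)
    (summable_geometric_of_lt_one h₀ h₁) (fun n f => ?_)
  · exact (continuous_of_discreteTopology (f := fun b : Bool => cond b (c ^ n) 0)).comp
      (continuous_apply n)
  · unfold Cardinal.cantorFunctionAux
    cases f n <;> simp [pow_nonneg h₀, abs_of_nonneg h₀]

/-- The differences of differences of points in the set of sums `∑ εₙ 10⁻ⁿ` with digits `0, 1`. -/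
def cantorDiffs : Set ℝ :=
  range fun p : ((ℕ → Bool) × (ℕ → Bool)) × ((ℕ → Bool) × (ℕ → Bool)) =>
    (Cardinal.cantorFunction (1 / 10) p.1.1 - Cardinal.cantorFunction (1 / 10) p.1.2) -
      (Cardinal.cantorFunction (1 / 10) p.2.1 - Cardinal.cantorFunction (1 / 10) p.2.2)

theorem isCompact_cantorDiffs : IsCompact cantorDiffs := by
  have h : Continuous (Cardinal.cantorFunction (1 / 10)) :=
    continuous_cantorFunction (by norm_num) (by norm_num)
  refine isCompact_range ?_
  fun_prop

theorem neg_mem_cantorDiffs {x : ℝ} (hx : x ∈ cantorDiffs) : -x ∈ cantorDiffs := by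
  obtain ⟨⟨p, q⟩, rfl⟩ := hx
  exact ⟨(q, p), by simp⟩

theorem cantorDiffs_subset :
    cantorDiffs ⊆ ⋃ d ∈ Finset.Icc (-2 : ℤ) 2,
      (fun x : ℝ => x + -(d : ℝ)) ⁻¹' ((fun x : ℝ => 10 * x) ⁻¹' cantorDiffs) := by
  rintro x ⟨⟨⟨a, b⟩, ⟨c, d⟩⟩, rfl⟩
  have hs (f : ℕ → Bool) : ∃ k : ℤ, (0 ≤ k ∧ k ≤ 1) ∧ Cardinal.cantorFunction (1 / 10) f =
      k + (1 / 10) * Cardinal.cantorFunction (1 / 10) (fun n => f (n + 1)) := by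
    rw [Cardinal.cantorFunction_succ f (by norm_num) (by norm_num)]
    cases f 0
    · exact ⟨0, by simp⟩
    · exact ⟨1, by simp⟩
  obtain ⟨ka, ha, ea⟩ := hs a
  obtain ⟨kb, hb, eb⟩ := hs b
  obtain ⟨kc, hc, ec⟩ := hs c
  obtain ⟨kd, hd, ed⟩ := hs d
  simp only [mem_iUnion, mem_preimage]
  refine ⟨(ka - kb) - (kc - kd), Finset.mem_Icc.2 ⟨by omega, by omega⟩,
    ⟨((fun n => a (n + 1), fun n => b (n + 1)), (fun n => c (n + 1), fun n => d (n + 1))), ?_⟩⟩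
  simp only [ea, eb, ec, ed]
  push_cast
  ring

theorem volume_cantorDiffs : volume cantorDiffs = 0 := by
  have hfin : volume cantorDiffs ≠ ∞ := isCompact_cantorDiffs.measure_lt_top.ne
  have h : volume cantorDiffs ≤
      ∑ d ∈ Finset.Icc (-2 : ℤ) 2, ENNReal.ofReal (1 / 10) * volume cantorDiffs := by
    refine (measure_mono cantorDiffs_subset).trans
      ((measure_biUnion_finset_le _ _).trans (Finset.sum_le_sum fun d _ => ?_))
    rw [measure_preimage_add_right, Real.volume_preimage_mul_left (by norm_num)]
    norm_num
  rw [Finset.sum_const] at h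
  have h' := ENNReal.toReal_mono (by simp [hfin, ENNReal.mul_eq_top]) h
  simp only [Int.card_Icc, nsmul_eq_mul, ENNReal.toReal_mul, ENNReal.toReal_natCast] at h'
  rw [ENNReal.toReal_ofReal (by norm_num)] at h'
  rw [show (2 + 1 - -2 : ℤ).toNat = 5 from rfl] at h'
  norm_num at h'
  have h0 : (volume cantorDiffs).toReal = 0 := by
    have := ENNReal.toReal_nonneg (a := volume cantorDiffs)
    linarith
  exact (ENNReal.toReal_eq_zero_iff _).1 h0 |>.resolve_right hfin

theorem exists_compact_pair_sub_notMem {E F : Set ℝ} (hE : IsClosed E) (hE0 : volume E = 0)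
    (hF : IsCompact F) (hF0 : volume F ≠ 0) :
    ∃ A : Bool → Set ℝ, (∀ b, IsCompact (A b) ∧ volume (A b) ≠ 0 ∧ A b ⊆ F) ∧
      ∀ x ∈ A true, ∀ y ∈ A false, x - y ∉ E := by
  obtain ⟨y, -, hy⟩ := exists_mem_forall_mem_nhdsWithin_pos_measure hF0
  have hN : volume ((fun x => x + -y) ⁻¹' E) = 0 := by rw [measure_preimage_add_right, hE0]
  have hF1 : volume (F \ (fun x => x + -y) ⁻¹' E) ≠ 0 := by
    rwa [measure_sdiff_null hN]
  obtain ⟨x, hxF, hx⟩ := exists_mem_forall_mem_nhdsWithin_pos_measure hF1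
  have hxy : ∀ᶠ p : ℝ × ℝ in 𝓝 x ×ˢ 𝓝 y, p.1 - p.2 ∈ Eᶜ := by
    rw [← nhds_prod_eq]
    refine (continuous_fst.sub continuous_snd).continuousAt.eventually_mem
      (hE.isOpen_compl.mem_nhds ?_)
    simpa [sub_eq_add_neg] using hxF.2
  obtain ⟨s, hs, t, ht, hst⟩ := Filter.eventually_prod_iff.1 hxy
  obtain ⟨ε, hε, hεs⟩ := Metric.nhds_basis_closedBall.eventually_iff.1 hs
  obtain ⟨δ, hδ, hδt⟩ := Metric.nhds_basis_closedBall.eventually_iff.1 ht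
  refine ⟨fun b => cond b (F ∩ Metric.closedBall x ε) (F ∩ Metric.closedBall y δ), ?_, ?_⟩
  · rintro (_ | _)
    · refine ⟨hF.inter_right Metric.isClosed_closedBall, (hy _ ?_).ne', inter_subset_left⟩
      exact Filter.inter_mem self_mem_nhdsWithin
        (mem_nhdsWithin_of_mem_nhds (Metric.closedBall_mem_nhds y hδ))
    · refine ⟨hF.inter_right Metric.isClosed_closedBall,
        ((hx ((F \ (fun x => x + -y) ⁻¹' E) ∩ Metric.closedBall x ε) ?_).trans_le
          (measure_mono (inter_subset_inter_left _ sdiff_subset))).ne', inter_subset_left⟩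
      exact Filter.inter_mem self_mem_nhdsWithin
        (mem_nhdsWithin_of_mem_nhds (Metric.closedBall_mem_nhds x hε))
  · rintro u ⟨-, hu⟩ v ⟨-, hv⟩
    exact hst (hεs hu) (hδt hv)

theorem exists_cantor_family_sub_notMem {E F : Set ℝ} (hE : IsClosed E) (hE0 : volume E = 0)
    (hneg : ∀ x ∈ E, -x ∈ E) (hF : IsCompact F) (hF0 : volume F ≠ 0) :
    ∃ P : (ℕ → Bool) → ℝ, (∀ b, P b ∈ F) ∧ ∀ b b', b ≠ b' → P b - P b' ∉ E := by
  have hsplit (G : {G : Set ℝ // IsCompact G ∧ volume G ≠ 0}) :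
      ∃ A : Bool → {G : Set ℝ // IsCompact G ∧ volume G ≠ 0},
        (∀ b, (A b : Set ℝ) ⊆ G) ∧
          ∀ x ∈ (A true : Set ℝ), ∀ y ∈ (A false : Set ℝ), x - y ∉ E := by
    obtain ⟨A, hA, hd⟩ := exists_compact_pair_sub_notMem hE hE0 G.2.1 G.2.2
    exact ⟨fun b => ⟨A b, (hA b).1, (hA b).2.1⟩, fun b => (hA b).2.2, hd⟩
  choose A hA hd using hsplit
  let T (b : ℕ → Bool) (n : ℕ) : {G : Set ℝ // IsCompact G ∧ volume G ≠ 0} :=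
    Nat.rec ⟨F, hF, hF0⟩ (fun n G => A G (b n)) n
  have hT (b : ℕ → Bool) : (⋂ n, (T b n).1).Nonempty :=
    IsCompact.nonempty_iInter_of_sequence_nonempty_isCompact_isClosed
      (fun n => (T b n).1)
      (fun n => hA (T b n) (b n)) (fun n => nonempty_of_measure_ne_zero (T b n).2.2)
      (T b 0).2.1 (fun n => (T b n).2.1.isClosed)
  choose P hP using hT
  simp only [mem_iInter] at hP
  refine ⟨P, fun b => hP b 0, fun b b' hbb' => ?_⟩
  have hex : ∃ n, b n ≠ b' n := Function.ne_iff.1 hbb'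
  classical
  let n := Nat.find hex
  have hn : b n ≠ b' n := Nat.find_spec hex
  have hprefix : ∀ m ≤ n, T b m = T b' m := by
    intro m
    induction m with
    | zero => intro _; rfl
    | succ m ih =>
      intro hm
      have hbm : b m = b' m := not_not.1 (Nat.find_min hex (Nat.lt_of_succ_le hm))
      change A (T b m) (b m) = A (T b' m) (b' m)
      rw [ih (Nat.le_of_succ_le hm), hbm]
  have h1 : P b ∈ (A (T b n) (b n) : Set ℝ) := hP b (n + 1)
  have h2 : P b' ∈ (A (T b n) (b' n) : Set ℝ) := by
    rw [hprefix n le_rfl]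
    exact hP b' (n + 1)
  generalize b n = i at hn h1
  generalize b' n = j at hn h2
  cases i <;> cases j
  · exact absurd rfl hn
  · intro hmem
    refine hd _ _ h2 _ h1 ?_
    simpa using hneg _ hmem
  · exact hd _ _ h1 _ h2
  · exact absurd rfl hn

/-- Transfinite selection: if no `F i` is covered by fewer than `#I` sections of `R`, then
representatives of the `F i` can be chosen so that no later one is `R`-related to an earlier one. -/
theorem exists_selection {I α : Type} (F : I → Set α) (R : α → α → Prop)
    (h : ∀ i, ∀ J : Set I, Cardinal.mk J < Cardinal.mk I → ∀ x : J → α,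
      ∃ y ∈ F i, ∀ j, ¬ R y (x j)) :
    ∃ (r : I → I → Prop) (_ : IsWellOrder I r) (x : I → α),
      (∀ i, x i ∈ F i) ∧ ∀ i j, r j i → ¬ R (x i) (x j) := by
  obtain ⟨r, hr, hord⟩ := Cardinal.exists_ord_eq I
  have hlt (i : I) : Cardinal.mk {j | r j i} < Cardinal.mk I := by
    have := Ordinal.typein_lt_type r i
    rw [← hord, Cardinal.lt_ord] at this
    exact this
  have wf : WellFounded r := hr.wf
  choose g hgF hgR using fun i => h i _ (hlt i)
  let x : I → α := wf.fix fun i rec => g i fun j => rec j.1 j.2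
  have hx (i : I) : x i = g i fun j => x j.1 := wf.fix_eq _ i
  refine ⟨r, hr, x, fun i => ?_, fun i j hji => ?_⟩
  · rw [hx]
    exact hgF _ _
  · rw [hx i]
    exact hgR i (fun j => x j.1) ⟨j, hji⟩

theorem exists_nonnull_cantor_sub_separated :
    ∃ X : Set ℝ, 0 < volume X ∧ ∀ x ∈ X, ∀ y ∈ X, ∀ a b : ℕ → Bool,
      x - y = Cardinal.cantorFunction (1 / 10) a - Cardinal.cantorFunction (1 / 10) b →
        x = y := by
  let I := {F : Set ℝ // IsCompact F ∧ volume F ≠ 0}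
  have hI : Cardinal.mk I ≤ Cardinal.continuum := by
    obtain ⟨b, hb, hgen⟩ := MeasurableSpace.CountablyGenerated.isCountablyGenerated (α := ℝ)
    have hle := MeasurableSpace.cardinal_measurableSet_le_continuum
      ((Cardinal.le_aleph0_iff_set_countable.2 hb).trans Cardinal.aleph0_le_continuum)
    rw [← hgen] at hle
    exact (Cardinal.mk_subtype_mono fun F hF => hF.1.measurableSet).trans hle
  let R (x y : ℝ) : Prop := ∃ a b : ℕ → Bool,
    x - y = Cardinal.cantorFunction (1 / 10) a - Cardinal.cantorFunction (1 / 10) b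
  obtain ⟨r, hr, x, hxF, hxR⟩ := exists_selection (fun F : I => F.1) R (by
    intro F J hJ x
    obtain ⟨P, hPF, hP⟩ := exists_cantor_family_sub_notMem isCompact_cantorDiffs.isClosed
      volume_cantorDiffs (fun _ => neg_mem_cantorDiffs) F.2.1 F.2.2
    by_contra! hcon
    choose j hj using fun b => hcon (P b) (hPF b)
    have hinj : Function.Injective j := by
      intro b b' hbb'
      by_contra hne
      obtain ⟨a₁, a₂, ha⟩ := hj b
      obtain ⟨a₃, a₄, ha'⟩ := hj b'
      refine hP b b' hne ⟨((a₁, a₂), (a₃, a₄)), ?_⟩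
      rw [← hbb'] at ha'
      change _ - _ = _
      linarith
    have := (Cardinal.mk_le_of_injective hinj).trans_lt (hJ.trans_le hI)
    simp at this)
  refine ⟨range x, ?_, ?_⟩
  · rw [pos_iff_ne_zero]
    intro h0
    have hN : volume (toMeasurable volume (range x))ᶜ ≠ 0 := by
      rw [measure_compl (measurableSet_toMeasurable _ _) (by simp [h0])]
      simp [h0]
    obtain ⟨K, hK, hKc, hKpos⟩ := (measurableSet_toMeasurable volume
      (range x)).compl.exists_lt_isCompact (pos_iff_ne_zero.2 hN)
    exact hK (hxF ⟨K, hKc, hKpos.ne'⟩) (subset_toMeasurable _ _ (mem_range_self _))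
  · rintro _ ⟨i, rfl⟩ _ ⟨j, rfl⟩ a b hab
    rcases trichotomous_of r i j with h | h | h
    · exact absurd ⟨b, a, by linarith⟩ (hxR j i h)
    · rw [h]
    · exact absurd ⟨a, b, hab⟩ (hxR i j h)

theorem stmt5 :
    ∃ (X : Set ℝ) (μ : Measure ℝ), IsProbabilityMeasure μ ∧
      0 < volume X ∧ ∀ t : ℝ, μ ((fun x => x + t) '' X) = 0 := by
  obtain ⟨X, hX, hsep⟩ := exists_nonnull_cantor_sub_separated
  let e : ℝ ≃ᵐ (ℕ → Bool) :=
    PolishSpace.measurableEquivNatBoolOfNotCountable (fun h => Cardinal.not_countable_real (countable_univ_iff.2 h))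
  let g : ℝ → ℝ := fun s => Cardinal.cantorFunction (1 / 10) (e s)
  have hg : MeasurableEmbedding g :=
    ((continuous_cantorFunction (by norm_num) (by norm_num)).measurable.comp
      e.measurable).measurableEmbedding
      ((Cardinal.cantorFunction_injective (by norm_num) (by norm_num)).comp e.injective)
  have hvol : IsProbabilityMeasure (volume.restrict (Icc (0 : ℝ) 1)) := ⟨by simp⟩
  refine ⟨X, (volume.restrict (Icc (0 : ℝ) 1)).map g,
    Measure.isProbabilityMeasure_map hg.measurable.aemeasurable, hX, fun t => ?_⟩
  rw [hg.map_apply]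
  refine Set.Subsingleton.measure_zero ?_ _
  rintro s ⟨x, hx, hxs⟩ s' ⟨x', hx', hxs'⟩
  refine hg.injective ?_
  have hxx' : x = x' := hsep x hx x' hx' (e s) (e s') (by
    change x - x' = g s - g s'
    rw [← hxs, ← hxs']
    ring)
  rw [← hxs, ← hxs', hxx']
end
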